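/- arXiv:2507.21658 — 2 statements merged into one kernel-verified Lean document; each statement's English description precedes it below -/
import Mathlib

section
/- Let n > 1 be a square-free integer and let a_{n,r,t} be the automorphism of D_{2n} determined by integers r, t with gcd(r, n) = 1. Then c(V_n, a_{n,r,t}) = Σ (d/κ(n,r,t)) · φ( |r|_n / (ℓ · gcd(κ(d,r,t), |r|_n)) ), where the sum ranges over all pairs (d, ℓ) with d a divisor of n, ℓ a divisor of |r|_n / gcd(κ(d,r,t), |r|_n), and gcd(r^{ℓ·κ(d,r,t)} − 1, n) = d, and φ is Euler's totient function. -/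
/-- The cycle number of a map `f` on a subset `s`: the number of equivalence classes of
points of `s` under the equivalence relation generated by `x ↦ f x`, i.e. the number of
orbits (cycles) of `f` meeting `s` when `s` is `f`-invariant. -/
noncomputable def cycleCount {Ω : Type*} (f : Ω → Ω) (s : Set Ω) : ℕ :=
  Nat.card (Quot fun a b : s => f (a : Ω) = (b : Ω))

/-- `|r|_m`: the multiplicative order of the integer `r` modulo `m`. -/
noncomputable def ordMod (m : ℕ) (r : ℤ) : ℕ := orderOf ((r : ZMod m))

/-- The map `a_{n,r,t}` on the dihedral group `D_{2n}`, sending `u^i ↦ u^{ri}` and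
`u^j v ↦ u^{rj+t} v`. (In Mathlib's `DihedralGroup`, with `u := r 1` and `v := sr 0`, one has
`u^j * v = sr (-j)`, so this map is `r i ↦ r (r·i)`, `sr j ↦ sr (r·j - t)`.) -/
def dihedralAut (n : ℕ) (r t : ℤ) : DihedralGroup n → DihedralGroup n
  | DihedralGroup.r i => DihedralGroup.r ((r : ZMod n) * i)
  | DihedralGroup.sr j => DihedralGroup.sr ((r : ZMod n) * j - (t : ZMod n))

/-- `U_n(d)`: the set of elements of order `d` in the cyclic subgroup `⟨u⟩` of `D_{2n}`. -/
def UnD (n d : ℕ) : Set (DihedralGroup n) :=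
  {x | (∃ i, x = DihedralGroup.r i) ∧ orderOf x = d}

/-- `U_n`: the set of nonidentity elements of the cyclic subgroup `⟨u⟩` of `D_{2n}`. -/
def Un (n : ℕ) : Set (DihedralGroup n) :=
  {x | (∃ i, x = DihedralGroup.r i) ∧ x ≠ 1}

/-- `V_n := {u^j v : 0 ≤ j ≤ n-1}`, the set of reflections of `D_{2n}`. -/
def Vn (n : ℕ) : Set (DihedralGroup n) :=
  {x | ∃ j, x = DihedralGroup.sr j}

/-- `S_m(x) := 1 + x + ⋯ + x^{m-1}`, with `S_0(x) := 0`. -/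
def Spoly (m : ℕ) (r : ℤ) : ℤ := ∑ i ∈ Finset.range m, r ^ i

/-- `κ(n,r,t) := n·|r|_n / gcd(n, t·S_{|r|_n}(r))`. -/
noncomputable def kappa (n : ℕ) (r t : ℤ) : ℕ :=
  n * ordMod n r / Int.gcd (n : ℤ) (t * Spoly (ordMod n r) r)

/-!
By Burnside's lemma, `c(V_n, a) · |a|` is the total number of fixed points of the powers of
`a = a_{n,r,t}`. On the indices of the reflections `a` acts as `x ↦ r x - t`, a permutation of
`ℤ/n` of order `κ(n,r,t)`. The fixed points of `a^k` solve the linear congruence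
`(r^k - 1) x ≡ t S_k(r)` modulo `n`; with `d = gcd(r^k - 1, n)` there are `d` of them if
`κ(d,r,t) ∣ k` and none otherwise.

It remains to count, for each `d ∣ n`, the multiples `k = j κ(d,r,t)` below `κ(n,r,t)` with
`gcd(r^k - 1, n) = d`. If there is any such `k`, then square-freeness makes `r - 1` invertible
modulo `n / d`, so that `κ(n,r,t) = lcm(κ(d,r,t), |r|_n)`. Hence `j` ranges over an interval of
length `M = |r|_n / gcd(κ(d,r,t), |r|_n)`, and since the condition depends on `j` only through
`ℓ = gcd(M, j)`, each admissible `ℓ ∣ M` contributes `φ(M / ℓ)` values of `j`.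
-/

open Finset

section Orbits

lemma cycleCount_range_of_semiconj {α Ω : Type*} {f : α → α} {g : Ω → Ω} {e : α → Ω}
    (he : Function.Injective e) (h : Function.Semiconj e f g) :
    cycleCount g (Set.range e) = cycleCount f Set.univ :=
  Nat.card_congr <| .symm <| Quot.congr
    ((Equiv.Set.univ α).trans (Equiv.ofInjective e he)) fun x y => by
      simp [← h.eq, he.eq_iff]

lemma cycleCount_univ_eq_card_orbits {α : Type*} (a : Equiv.Perm α) :
    cycleCount a Set.univ = Nat.card (MulAction.orbitRel.Quotient (Subgroup.zpowers a) α) := by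
  let cls (x : α) : Quot fun x y : (Set.univ : Set α) => a x = (y : α) :=
    Quot.mk _ ⟨x, trivial⟩
  have cls_apply (x : α) : cls (a x) = cls x := Eq.symm <| Quot.sound <| by rfl
  have cls_zpow_apply (k : ℤ) (x : α) : cls ((a ^ k) x) = cls x := by
    induction k generalizing x with
    | zero => rfl
    | succ k ih => rw [zpow_add_one, Equiv.Perm.mul_apply, ih, cls_apply]
    | pred k ih =>
      rw [zpow_sub_one, Equiv.Perm.mul_apply, ih, ← cls_apply, ← Equiv.Perm.mul_apply,
        mul_inv_cancel, Equiv.Perm.one_apply]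
  refine Nat.card_congr
    { toFun := Quot.lift (fun x => Quotient.mk _ (x : α)) ?_
      invFun := Quotient.lift cls ?_
      left_inv := by rintro ⟨x⟩; rfl
      right_inv := by rintro ⟨x⟩; rfl }
  · intro x y hxy
    refine (Quotient.sound ?_).symm
    exact ⟨⟨a, Subgroup.mem_zpowers a⟩, hxy⟩
  · rintro _ y ⟨⟨_, k, rfl⟩, rfl⟩
    exact cls_zpow_apply k y

lemma cycleCount_univ_mul_orderOf {α : Type*} [Finite α] (a : Equiv.Perm α) :
    cycleCount a Set.univ * orderOf a =
      ∑ k ∈ range (orderOf a), Nat.card (Function.fixedPoints ⇑(a ^ k)) := by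
  classical
  have := Fintype.ofFinite α
  have hburnside :=
    MulAction.sum_card_fixedBy_eq_card_orbits_mul_card_group (Subgroup.zpowers a) α
  rw [Fintype.card_zpowers, ← Nat.card_eq_fintype_card] at hburnside
  rw [cycleCount_univ_eq_card_orbits, ← hburnside, sum_range]
  refine Eq.symm <| Fintype.sum_equiv (finEquivZPowers (isOfFinOrder_of_finite a)) _ _ fun k => ?_
  rw [← Nat.card_eq_fintype_card]
  rfl

end Orbits

section AffinePerm

variable {R : Type*} [Ring R]

/-- The affine permutation `x ↦ u x - t` of a ring; for `R = ZMod n` it describes the action of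
`a_{n,r,t}` on the indices of the reflections `DihedralGroup.sr j`. -/
def affinePerm (u : Rˣ) (t : R) : Equiv.Perm R :=
  (Units.mulLeft u).trans (Equiv.subRight t)

lemma affinePerm_apply (u : Rˣ) (t x : R) : affinePerm u t x = u * x - t := rfl

lemma affinePerm_pow_apply (u : Rˣ) (t : R) (k : ℕ) (x : R) :
    (affinePerm u t ^ k) x = (u : R) ^ k * x - (∑ i ∈ range k, (u : R) ^ i) * t := by
  induction k generalizing x with
  | zero => simp
  | succ k ih =>
    rw [pow_succ, Equiv.Perm.mul_apply, ih, affinePerm_apply, sum_range_succ, pow_succ]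
    noncomm_ring

lemma affinePerm_pow_eq_one_iff (u : Rˣ) (t : R) (k : ℕ) :
    affinePerm u t ^ k = 1 ↔ (u : R) ^ k = 1 ∧ (∑ i ∈ range k, (u : R) ^ i) * t = 0 := by
  simp only [Equiv.ext_iff, affinePerm_pow_apply, Equiv.Perm.one_apply]
  refine ⟨fun h => ?_, fun ⟨hu, ht⟩ x => by rw [hu, ht, one_mul, sub_zero]⟩
  have ht : (∑ i ∈ range k, (u : R) ^ i) * t = 0 := by simpa using h 0
  exact ⟨by simpa [ht] using h 1, ht⟩

lemma cycleCount_dihedralAut_Vn {n : ℕ} {r : ℤ} {u : (ZMod n)ˣ} (hu : (u : ZMod n) = r) (t : ℤ) :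
    cycleCount (dihedralAut n r t) (Vn n) = cycleCount (affinePerm u (t : ZMod n)) Set.univ := by
  have hVn : Vn n = Set.range DihedralGroup.sr := by
    ext x
    simp only [Vn, Set.mem_ofPred_eq, Set.mem_range, eq_comm]
  rw [hVn]
  refine cycleCount_range_of_semiconj (fun _ _ => DihedralGroup.sr.inj) fun j => ?_
  rw [affinePerm_apply, hu, dihedralAut]

end AffinePerm

section Kappa

variable {n : ℕ} {r : ℤ}

lemma ordMod_dvd_iff (k : ℕ) : ordMod n r ∣ k ↔ (n : ℤ) ∣ r ^ k - 1 := by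
  rw [ordMod, orderOf_dvd_iff_pow_eq_one, ← ZMod.intCast_zmod_eq_zero_iff_dvd, Int.cast_sub,
    Int.cast_pow, Int.cast_one, sub_eq_zero]

lemma Spoly_add (a b : ℕ) (r : ℤ) : Spoly (a + b) r = Spoly a r + r ^ a * Spoly b r := by
  simp only [Spoly, sum_range_add, mul_sum, pow_add]

lemma Spoly_mul_modEq {o : ℕ} {N : ℤ} (h : r ^ o ≡ 1 [ZMOD N]) (m : ℕ) :
    Spoly (o * m) r ≡ Spoly o r * m [ZMOD N] := by
  induction m with
  | zero => simp [Spoly]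
  | succ m ih =>
    calc Spoly (o * (m + 1)) r = Spoly o r + r ^ o * Spoly (o * m) r := by
          rw [mul_add_one, add_comm, Spoly_add]
      _ ≡ Spoly o r + 1 * (Spoly o r * m) [ZMOD N] := (h.mul ih).add_left _
      _ = Spoly o r * (m + 1 : ℕ) := by push_cast; ring

lemma kappa_eq_ordMod_mul (n : ℕ) (r t : ℤ) :
    kappa n r t = ordMod n r * (n / Int.gcd n (t * Spoly (ordMod n r) r)) := by
  rw [kappa, mul_comm,
    Nat.mul_div_assoc _ (Int.natCast_dvd_natCast.1 (Int.gcd_dvd_left (n : ℤ) _))]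

lemma div_gcd_dvd_iff (hn : n ≠ 0) (x : ℤ) (m : ℕ) :
    n / Int.gcd n x ∣ m ↔ (n : ℤ) ∣ x * m := by
  have hg : Int.gcd n x ∣ n := Int.natCast_dvd_natCast.1 (Int.gcd_dvd_left (n : ℤ) x)
  rw [Nat.div_dvd_iff_dvd_mul hg (Nat.pos_of_dvd_of_pos hg (Nat.pos_of_ne_zero hn)), mul_comm,
    ← Int.natCast_dvd_natCast, Nat.cast_mul, Int.dvd_mul_gcd_iff_dvd_mul, mul_comm]

lemma kappa_dvd_iff (hn : n ≠ 0) (t : ℤ) (k : ℕ) :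
    kappa n r t ∣ k ↔ ordMod n r ∣ k ∧ (n : ℤ) ∣ t * Spoly k r := by
  have hpow : r ^ ordMod n r ≡ 1 [ZMOD n] :=
    (Int.modEq_iff_dvd.2 ((ordMod_dvd_iff _).1 dvd_rfl)).symm
  have hmul (m : ℕ) : n / Int.gcd n (t * Spoly (ordMod n r) r) ∣ m ↔
      (n : ℤ) ∣ t * Spoly (ordMod n r * m) r := by
    rw [div_gcd_dvd_iff hn, mul_assoc]
    exact ((Spoly_mul_modEq hpow m).symm.mul_left t).dvd_iff
  rw [kappa_eq_ordMod_mul]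
  constructor
  · rintro ⟨q, rfl⟩
    rw [mul_assoc]
    exact ⟨dvd_mul_right _ _, (hmul _).1 (dvd_mul_right _ _)⟩
  · rintro ⟨⟨m, rfl⟩, h⟩
    exact mul_dvd_mul_left _ ((hmul m).2 h)

lemma orderOf_affinePerm (hn : n ≠ 0) {u : (ZMod n)ˣ} (hu : (u : ZMod n) = r) (t : ℤ) :
    orderOf (affinePerm u (t : ZMod n)) = kappa n r t := by
  refine Nat.dvd_right_iff_eq.1 fun k => ?_
  rw [orderOf_dvd_iff_pow_eq_one, affinePerm_pow_eq_one_iff, kappa_dvd_iff hn, ordMod,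
    orderOf_dvd_iff_pow_eq_one, hu, ← ZMod.intCast_zmod_eq_zero_iff_dvd, mul_comm]
  simp only [Spoly, Int.cast_mul, Int.cast_sum, Int.cast_pow]

lemma exists_unit_eq_intCast (hr : Int.gcd r n = 1) : ∃ u : (ZMod n)ˣ, (u : ZMod n) = r :=
  (ZMod.coe_int_isUnit_iff_isCoprime r n).2 (Int.isCoprime_iff_gcd_eq_one.2 hr).symm

lemma kappa_pos (hn : n ≠ 0) (hr : Int.gcd r n = 1) (t : ℤ) : 0 < kappa n r t := by
  have : NeZero n := ⟨hn⟩
  obtain ⟨u, hu⟩ := exists_unit_eq_intCast hr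
  exact orderOf_affinePerm hn hu t ▸ orderOf_pos _

lemma kappa_eq_lcm {d : ℕ} (hn : n ≠ 0) (hd : d ∣ n) (hcop : Nat.Coprime d (n / d))
    (hr : IsCoprime ((n / d : ℕ) : ℤ) (r - 1)) (t : ℤ) :
    kappa n r t = Nat.lcm (kappa d r t) (ordMod n r) := by
  have hn_eq : (n : ℤ) = d * (n / d : ℕ) := by rw [← Nat.cast_mul, Nat.mul_div_cancel' hd]
  have hd_dvd : (d : ℤ) ∣ n := Int.natCast_dvd_natCast.2 hd
  refine Nat.dvd_right_iff_eq.1 fun k => ?_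
  rw [Nat.lcm_dvd_iff, kappa_dvd_iff hn, kappa_dvd_iff (ne_zero_of_dvd_ne_zero hn hd),
    ordMod_dvd_iff, ordMod_dvd_iff]
  constructor
  · rintro ⟨hpow, hsum⟩
    exact ⟨⟨hd_dvd.trans hpow, hd_dvd.trans hsum⟩, hpow⟩
  · rintro ⟨⟨-, hsum⟩, hpow⟩
    refine ⟨hpow, ?_⟩
    -- `r - 1` is invertible modulo `n / d`, which divides `r ^ k - 1 = S_k(r) (r - 1)`.
    have hdiv_dvd : ((n / d : ℕ) : ℤ) ∣ Spoly k r := by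
      refine hr.dvd_of_dvd_mul_right ?_
      rw [Spoly, geom_sum_mul]
      exact (Dvd.intro_left _ hn_eq.symm).trans hpow
    rw [hn_eq]
    exact (Nat.isCoprime_iff_coprime.2 hcop).mul_dvd hsum (hdiv_dvd.mul_left t)

end Kappa

section FixedPoints

variable {n : ℕ}

lemma exists_intCast_mul_eq_iff (c b : ℤ) :
    (∃ x : ZMod n, (c : ZMod n) * x = b) ↔ (Int.gcd c n : ℤ) ∣ b := by
  rw [Int.coe_gcd, gcd_dvd_iff_exists, (ZMod.intCast_surjective (n := n)).exists]
  refine exists_congr fun x => ?_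
  rw [← Int.cast_mul, ZMod.intCast_eq_intCast_iff_dvd_sub]
  exact exists_congr fun y => sub_eq_iff_eq_add'

lemma natCard_ker_mulLeft_intCast [NeZero n] (c : ℤ) :
    Nat.card (AddMonoidHom.mulLeft (c : ZMod n)).ker = Int.gcd c n := by
  have hmul : AddMonoidHom.mulLeft (c : ZMod n) = nsmulAddMonoidHom (c : ZMod n).val := by
    ext
    simp
  rw [hmul, IsAddCyclic.card_nsmulAddMonoidHom_ker, Nat.card_zmod, ← Int.gcd_natCast_natCast,
    ZMod.val_intCast, Int.gcd_comm, Int.gcd_emod]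

lemma natCard_intCast_mul_eq [NeZero n] (c b : ℤ) :
    Nat.card {x : ZMod n // (c : ZMod n) * x = b} =
      if (Int.gcd c n : ℤ) ∣ b then Int.gcd c n else 0 := by
  split_ifs with h
  · obtain ⟨x₀, hx₀⟩ := (exists_intCast_mul_eq_iff c b).2 h
    rw [← natCard_ker_mulLeft_intCast, ← hx₀]
    exact Nat.card_congr ((AddMonoidHom.mulLeft (c : ZMod n)).fiberEquivKer x₀)
  · have : IsEmpty {x : ZMod n // (c : ZMod n) * x = b} :=
      ⟨fun x => h ((exists_intCast_mul_eq_iff c b).1 ⟨x, x.2⟩)⟩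
    exact Nat.card_of_isEmpty

lemma natCard_fixedPoints_affinePerm_pow [NeZero n] {r : ℤ} {u : (ZMod n)ˣ}
    (hu : (u : ZMod n) = r) (t : ℤ) (k : ℕ) :
    Nat.card (Function.fixedPoints ⇑(affinePerm u (t : ZMod n) ^ k)) =
      if kappa (Int.gcd (r ^ k - 1) n) r t ∣ k then Int.gcd (r ^ k - 1) n else 0 := by
  have hg : Int.gcd (r ^ k - 1) n ≠ 0 :=
    (Int.gcd_pos_of_ne_zero_right _ (Nat.cast_ne_zero.2 (NeZero.ne n))).ne'
  have hfix (x : ZMod n) : x ∈ Function.fixedPoints ⇑(affinePerm u (t : ZMod n) ^ k) ↔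
      ((r ^ k - 1 : ℤ) : ZMod n) * x = (t * Spoly k r : ℤ) := by
    rw [Function.mem_fixedPoints, Function.IsFixedPt, affinePerm_pow_apply, hu, sub_eq_iff_eq_add,
      ← sub_eq_iff_eq_add', Spoly]
    push_cast
    rw [sub_one_mul, mul_comm (t : ZMod n)]
  rw [Nat.card_congr (Equiv.subtypeEquivRight hfix), natCard_intCast_mul_eq]
  refine if_congr ?_ rfl rfl
  rw [kappa_dvd_iff hg, ordMod_dvd_iff, and_iff_right (Int.gcd_dvd_left _ _)]

lemma cycleCount_Vn_mul_kappa {r : ℤ} (hn : n ≠ 0) (hr : Int.gcd r n = 1) (t : ℤ) :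
    cycleCount (dihedralAut n r t) (Vn n) * kappa n r t =
      ∑ d ∈ n.divisors,
        d * #{k ∈ range (kappa n r t) | kappa d r t ∣ k ∧ Int.gcd (r ^ k - 1) n = d} := by
  have : NeZero n := ⟨hn⟩
  obtain ⟨u, hu⟩ := exists_unit_eq_intCast hr
  have hgcd (k : ℕ) : Int.gcd (r ^ k - 1) n ∈ n.divisors :=
    Nat.mem_divisors.2 ⟨Int.natCast_dvd_natCast.1 (Int.gcd_dvd_right _ (n : ℤ)), hn⟩
  rw [cycleCount_dihedralAut_Vn hu, ← orderOf_affinePerm hn hu, cycleCount_univ_mul_orderOf,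
    ← sum_fiberwise_of_maps_to fun k _ => hgcd k]
  refine sum_congr rfl fun d _ => ?_
  rw [mul_comm, ← smul_eq_mul, ← sum_const, sum_filter, sum_filter]
  refine sum_congr rfl fun k _ => ?_
  rw [natCard_fixedPoints_affinePerm_pow hu]
  grind

end FixedPoints

section Counting

lemma card_filter_range_of_gcd_invariant (M : ℕ) (P : ℕ → Prop) [DecidablePred P]
    (hP : ∀ j, P j ↔ P (M.gcd j)) :
    #{j ∈ range M | P j} = ∑ l ∈ M.divisors, if P l then Nat.totient (M / l) else 0 := by
  rcases eq_or_ne M 0 with rfl | hM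
  · simp
  have hgcd (j : ℕ) : M.gcd j ∈ M.divisors := Nat.mem_divisors.2 ⟨M.gcd_dvd_left j, hM⟩
  rw [card_eq_sum_card_fiberwise fun j _ => hgcd j]
  refine sum_congr rfl fun l hl => ?_
  have hiff (j : ℕ) (hj : M.gcd j = l) : P j ↔ P l := by rw [hP, hj]
  rw [Nat.totient_div_of_dvd (Nat.dvd_of_mem_divisors hl), filter_filter]
  split_ifs with hPl
  · exact congrArg card (filter_congr fun j _ => and_iff_right_of_imp fun hj => (hiff j hj).2 hPl)
  · exact card_eq_zero.2 (filter_false_of_mem fun j _ hj => hPl ((hiff j hj.2).1 hj.1))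

lemma card_filter_range_mul {K : ℕ} (hK : 0 < K) (M : ℕ) (P : ℕ → Prop) [DecidablePred P] :
    #{k ∈ range (K * M) | K ∣ k ∧ P k} = #{j ∈ range M | P (j * K)} := by
  refine (card_nbij' (· * K) (· / K) ?_ ?_ ?_ ?_).symm
  · intro j hj
    simp only [coe_filter, mem_range, Set.mem_ofPred_eq] at hj ⊢
    exact ⟨by rw [mul_comm]; exact Nat.mul_lt_mul_of_pos_left hj.1 hK, dvd_mul_left _ _, hj.2⟩
  · intro k hk
    simp only [coe_filter, mem_range, Set.mem_ofPred_eq] at hk ⊢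
    exact ⟨Nat.div_lt_of_lt_mul hk.1, by rw [Nat.div_mul_cancel hk.2.1]; exact hk.2.2⟩
  · intro j _
    exact Nat.mul_div_cancel j hK
  · intro k hk
    exact Nat.div_mul_cancel (mem_filter.1 hk).2.1

variable {n : ℕ} {r : ℤ}

-- An integer `e ∣ n` divides `r ^ k - 1` iff `|r|_e ∣ k`, and `|r|_e ∣ m` in any case.
lemma gcd_pow_sub_one_eq_gcd_pow_gcd {m : ℕ} (hm : ordMod n r ∣ m) (k : ℕ) :
    Int.gcd (r ^ k - 1) n = Int.gcd (r ^ m.gcd k - 1) n := by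
  refine Nat.dvd_left_iff_eq.1 fun e => ?_
  simp only [← Int.natCast_dvd_natCast, Int.dvd_coe_gcd_iff]
  simp only [← ordMod_dvd_iff, Nat.dvd_gcd_iff]
  refine and_congr_left fun he => (and_iff_right ?_).symm
  exact (ordMod_dvd_iff m).2 (he.trans ((ordMod_dvd_iff m).1 hm))

lemma isCoprime_div_sub_one_of_gcd_pow_sub_one_eq {d k : ℕ} (hd : d ∣ n)
    (hcop : Nat.Coprime d (n / d)) (h : Int.gcd (r ^ k - 1) n = d) :
    IsCoprime ((n / d : ℕ) : ℤ) (r - 1) := by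
  suffices hpow : Int.gcd (n / d : ℕ) (r ^ k - 1) = 1 from
    (Int.isCoprime_iff_gcd_eq_one.2 hpow).of_isCoprime_of_dvd_right (sub_one_dvd_pow_sub_one r k)
  have hdvd_div : Int.gcd (n / d : ℕ) (r ^ k - 1) ∣ n / d :=
    Int.natCast_dvd_natCast.1 (Int.gcd_dvd_left _ _)
  have hdvd_d : Int.gcd (n / d : ℕ) (r ^ k - 1) ∣ d := by
    conv_rhs => rw [← h]
    exact Int.dvd_gcd (Int.gcd_dvd_right _ _)
      (Int.natCast_dvd_natCast.2 (hdvd_div.trans (Nat.div_dvd_of_dvd hd)))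
  exact Nat.eq_one_of_dvd_coprimes hcop hdvd_d hdvd_div

lemma card_filter_kappa_dvd (hn : n ≠ 0) (hr : Int.gcd r n = 1) (t : ℤ) {d : ℕ} (hd : d ∣ n)
    (hcop : Nat.Coprime d (n / d)) :
    #{k ∈ range (kappa n r t) | kappa d r t ∣ k ∧ Int.gcd (r ^ k - 1) n = d} =
      ∑ l ∈ (ordMod n r / Nat.gcd (kappa d r t) (ordMod n r)).divisors,
        if Int.gcd (r ^ (l * kappa d r t) - 1) n = d then
          Nat.totient (ordMod n r / (l * Nat.gcd (kappa d r t) (ordMod n r))) else 0 := by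
  by_cases hex : ∃ k, Int.gcd (r ^ k - 1) n = d
  · obtain ⟨k, hk⟩ := hex
    have hlcm : kappa n r t = Nat.lcm (kappa d r t) (ordMod n r) :=
      kappa_eq_lcm hn hd hcop (isCoprime_div_sub_one_of_gcd_pow_sub_one_eq hd hcop hk) t
    set K := kappa d r t
    set M := ordMod n r / K.gcd (ordMod n r) with hM
    have hKM : kappa n r t = K * M := by
      rw [hlcm, Nat.lcm, Nat.mul_div_assoc _ (Nat.gcd_dvd_right _ _)]
    have hK : 0 < K := Nat.pos_of_mul_pos_right (hKM ▸ kappa_pos hn hr t)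
    have hord : ordMod n r ∣ M * K := by
      rw [mul_comm, ← hKM, hlcm]
      exact Nat.dvd_lcm_right _ _
    rw [hKM, card_filter_range_mul hK, card_filter_range_of_gcd_invariant]
    · simp only [hM, Nat.div_div_eq_div_mul, mul_comm]
    · intro j
      rw [gcd_pow_sub_one_eq_gcd_pow_gcd hord, Nat.gcd_mul_right]
  · simp only [not_exists.1 hex, and_false, filter_false, card_empty, if_false, sum_const_zero]

end Counting

/-- Let `n > 1` be square-free and let `a_{n,r,t}` be the automorphism of
`D_{2n}` determined by integers `r, t` with `gcd(r,n)=1`. Then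
`c(V_n, a_{n,r,t}) = Σ (d/κ(n,r,t)) · φ(|r|_n / (ℓ·gcd(κ(d,r,t),|r|_n)))`, the sum ranging
over pairs `(d,ℓ)` with `d ∣ n`, `ℓ ∣ |r|_n / gcd(κ(d,r,t),|r|_n)` and
`gcd(r^{ℓκ(d,r,t)} - 1, n) = d`. -/
theorem cycleCount_Vn_of_squarefree (n : ℕ) (hn : 1 < n) (hsf : Squarefree n) (r t : ℤ)
    (hr : Int.gcd r (n : ℤ) = 1) :
    (cycleCount (dihedralAut n r t) (Vn n) : ℚ)
      = ∑ d ∈ Nat.divisors n,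
          ∑ ℓ ∈ Nat.divisors (ordMod n r / Nat.gcd (kappa d r t) (ordMod n r)),
            if Int.gcd (r ^ (ℓ * kappa d r t) - 1) (n : ℤ) = d then
              (d : ℚ) / (kappa n r t : ℚ) *
                (Nat.totient (ordMod n r / (ℓ * Nat.gcd (kappa d r t) (ordMod n r))) : ℚ)
            else 0 := by
  have hn₀ : n ≠ 0 := hsf.ne_zero
  have hκ : (kappa n r t : ℚ) ≠ 0 := Nat.cast_ne_zero.2 (kappa_pos hn₀ hr t).ne'
  have hcop {d : ℕ} (hd : d ∣ n) : Nat.Coprime d (n / d) :=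
    Nat.coprime_of_squarefree_mul ((Nat.mul_div_cancel' hd).symm ▸ hsf)
  have hburnside := congrArg (Nat.cast (R := ℚ)) (cycleCount_Vn_mul_kappa hn₀ hr t)
  rw [Nat.cast_mul] at hburnside
  rw [eq_div_of_mul_eq hκ hburnside, Nat.cast_sum, sum_div]
  refine sum_congr rfl fun d hd => ?_
  have hdn : d ∣ n := Nat.dvd_of_mem_divisors hd
  rw [card_filter_kappa_dvd hn₀ hr t hdn (hcop hdn), Nat.cast_mul, Nat.cast_sum, mul_div_right_comm,
    mul_sum]
  refine sum_congr rfl fun l _ => ?_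
  rw [Nat.cast_ite, mul_ite, Nat.cast_zero, mul_zero]
end

section
/- Assume the dihedral group D_{2n} is a DCI-group with n > 2. Then the number of isomorphism classes of Cayley digraphs on D_{2n} equals (1/(n·φ(n))) · Σ_{t | n, t > 0} φ(n/t) · Σ_{1 ≤ r ≤ n−1, gcd(r,n)=1} 2^{c(U_n, a_{n,r,0}) + c(V_n, a_{n,r,t})}, where φ is Euler's totient function. -/
/-- The Cayley digraphs `Cay(R,S)` and `Cay(R,T)` are isomorphic: there is a bijection of `R`
carrying the arc set `{(x,y) : y x⁻¹ ∈ S}` of `Cay(R,S)` onto the arc set of `Cay(R,T)`. -/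
def cayleyIso {R : Type*} [Group R] (S T : Set R) : Prop :=
  ∃ e : R ≃ R, ∀ x y : R, y * x⁻¹ ∈ S ↔ e y * (e x)⁻¹ ∈ T

/-- `R` is a DCI-group: whenever `Cay(R,S)` and `Cay(R,T)` are isomorphic for
`S, T ⊆ R \ {1}`, there is a group automorphism `a` of `R` with `T = a(S)`. -/
def IsDCI (R : Type*) [Group R] : Prop :=
  ∀ S T : Set R, (1 : R) ∉ S → (1 : R) ∉ T → cayleyIso S T → ∃ a : MulAut R, T = ⇑a '' S

/-!
For a DCI-group `R`, the isomorphism classes of Cayley digraphs are the orbits of `Aut R` on the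
subsets of `R \ {1}`, and such a subset is fixed by `a` exactly when it is a union of cycles of `a`.
Burnside's lemma therefore gives `#classes * |Aut R| = ∑ a, 2 ^ c(R \ {1}, a)`.

For `n ≠ 2`, `Aut D_{2n}` is parametrised by `(r, t) ∈ (ZMod n)ˣ × ZMod n`. Conjugating
`a_{n,r,t}` by `a_{n,s,0}` gives `a_{n,r,st}`, so the summand depends on `t` only through its orbit
under multiplication by units: these orbits are represented by the divisors `d` of `n`, and the
orbit of `d` has `φ (n / d)` elements.
-/

open MulAction Set
open scoped Pointwise

section CycleCount

variable {Ω Ω' : Type*} {f g : Ω → Ω} {s t : Set Ω}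

lemma cycleCount_congr (h : EqOn f g s) : cycleCount f s = cycleCount g s := by
  have relation_eq : (fun a b : s => f a = b) = fun a b : s => g a = b := by
    funext a b
    rw [h a.2]
  rw [cycleCount, relation_eq, cycleCount]

lemma cycleCount_preimage_of_semiconj {f' : Ω' → Ω'} (e : Ω ≃ Ω')
    (h : Function.Semiconj e f f') (s : Set Ω') :
    cycleCount f (e ⁻¹' s) = cycleCount f' s :=
  Nat.card_congr <| Quot.congr (e.subtypeEquiv fun _ => Iff.rfl) fun a b => by
    simp only [Equiv.subtypeEquiv_apply, ← h.eq, e.apply_eq_iff_eq]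

lemma cycleCount_union [Finite s] [Finite t] (hs : MapsTo f s s) (ht : MapsTo f t t)
    (hst : Disjoint s t) :
    cycleCount f (s ∪ t) = cycleCount f s + cycleCount f t := by
  classical
  have notMem_left {x : Ω} (hx : x ∈ t) : x ∉ s := hst.notMem_of_mem_right hx
  rw [cycleCount, cycleCount, cycleCount, ← Nat.card_sum]
  refine Nat.card_congr
    { toFun := Quot.lift (fun x => if hx : x.1 ∈ s then .inl (Quot.mk _ ⟨x, hx⟩)
        else .inr (Quot.mk _ ⟨x, x.2.resolve_left hx⟩)) ?_
      invFun := Sum.elim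
        (Quot.map (inclusion subset_union_left) fun _ _ => id)
        (Quot.map (inclusion subset_union_right) fun _ _ => id)
      left_inv := ?_
      right_inv := ?_ }
  · rintro ⟨x, hx | hx⟩ ⟨_, _⟩ rfl
    · simp only [hx, hs hx, dite_true]
      exact congrArg _ (Quot.sound rfl)
    · simp only [notMem_left hx, notMem_left (ht hx), dite_false]
      exact congrArg _ (Quot.sound rfl)
  · rintro ⟨x, hx | hx⟩
    · simp [hx, Quot.map, inclusion]
    · simp [notMem_left hx, Quot.map, inclusion]
  · rintro (⟨x, hx⟩ | ⟨x, hx⟩)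
    · simp [hx, Quot.map, inclusion]
    · simp [notMem_left hx, Quot.map, inclusion]

lemma card_invariant_subsets [Finite s] (hs : f ⁻¹' s = s) :
    Nat.card {T : Set Ω // T ⊆ s ∧ f ⁻¹' T = T} = 2 ^ cycleCount f s := by
  let r : s → s → Prop := fun a b => f a = b
  have mem_iff (x : Ω) : f x ∈ s ↔ x ∈ s := Set.ext_iff.1 hs x
  let unionOfCycles : {T : Set Ω // T ⊆ s ∧ f ⁻¹' T = T} ≃ Set (Quot r) :=
    { toFun T := Quot.lift (fun x : s => (x : Ω) ∈ T.1) fun a b hab =>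
        propext <| by
          rw [← (show f a = b from hab), ← mem_preimage (f := f), T.2.2]
      invFun C := ⟨(↑) '' (Quot.mk r ⁻¹' C), Subtype.coe_image_subset _ _, by
        ext x
        by_cases hx : x ∈ s
        · have cycle_eq : Quot.mk r ⟨x, hx⟩ = Quot.mk r ⟨f x, (mem_iff x).2 hx⟩ := Quot.sound rfl
          simp [hx, mem_iff, cycle_eq]
        · simp [hx, mem_iff]⟩
      left_inv T := Subtype.ext <| by
        ext x
        exact ⟨by rintro ⟨y, hy, rfl⟩; exact hy, fun hx => ⟨⟨x, T.2.1 hx⟩, hx, rfl⟩⟩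
      right_inv C := by
        ext ⟨x⟩
        exact ⟨by rintro ⟨y, hy, hyx⟩; rwa [← Subtype.ext hyx], fun hx => ⟨x, hx, rfl⟩⟩ }
  have := Fintype.ofFinite (Quot r)
  rw [Nat.card_congr unionOfCycles, Nat.card_eq_fintype_card, Fintype.card_set,
    ← Nat.card_eq_fintype_card, cycleCount]

end CycleCount

section Burnside

variable {R : Type*} [Group R]

lemma cayleyIso_smul (a : MulAut R) (S : Set R) : cayleyIso S (a • S) :=
  ⟨a.toEquiv, fun x y => by
    change _ ↔ a y * (a x)⁻¹ ∈ a • S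
    rw [← map_inv, ← map_mul, ← MulAut.smul_def, smul_mem_smul_set_iff]⟩

variable (R) in
/-- The sets `S` for which the Cayley digraph `Cay(R, S)` is defined, with the action
`a • S = a(S)` of `Aut R`. -/
def connectionSets : SubMulAction (MulAut R) (Set R) where
  carrier := {S | 1 ∉ S}
  smul_mem' a S hS := by
    rwa [mem_ofPred_eq, ← smul_one a, smul_mem_smul_set_iff]

lemma IsDCI.cayleyIso_iff_mem_orbit (h : IsDCI R) (S T : connectionSets R) :
    cayleyIso (S : Set R) T ↔ S ∈ orbit (MulAut R) T := by
  rw [mem_orbit_symm, mem_orbit_iff]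
  constructor
  · intro hST
    obtain ⟨a, ha⟩ := h S T S.2 T.2 hST
    exact ⟨a, Subtype.ext ha.symm⟩
  · rintro ⟨a, rfl⟩
    exact cayleyIso_smul a S

lemma mem_fixedBy_connectionSets_iff (a : MulAut R) (S : connectionSets R) :
    S ∈ fixedBy (connectionSets R) a ↔ a ⁻¹' S = S := by
  rw [mem_fixedBy, Subtype.ext_iff]
  change a • (S : Set R) = S ↔ (a • ·) ⁻¹' (S : Set R) = S
  rw [preimage_smul, inv_smul_eq_iff, eq_comm]

lemma card_fixedBy_connectionSets [Finite R] (a : MulAut R) :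
    Nat.card (fixedBy (connectionSets R) a) = 2 ^ cycleCount a {1}ᶜ := by
  have preimage_compl_one : a ⁻¹' {1}ᶜ = {1}ᶜ := by
    ext x
    simp
  rw [← card_invariant_subsets preimage_compl_one]
  simp only [subset_compl_singleton_iff]
  exact Nat.card_congr <| (Equiv.subtypeEquivRight (mem_fixedBy_connectionSets_iff a)).trans <|
    Equiv.subtypeSubtypeEquivSubtypeInter (· ∈ connectionSets R) fun S => a ⁻¹' S = S

lemma IsDCI.card_cayleyClasses_mul_card_mulAut [Finite R] [Fintype (MulAut R)] (h : IsDCI R) :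
    Nat.card (Quot fun S T : {S : Set R // 1 ∉ S} => cayleyIso (S : Set R) T) *
        Nat.card (MulAut R) = ∑ a : MulAut R, 2 ^ cycleCount a {1}ᶜ := by
  have classesEquivOrbits : (Quot fun S T : {S : Set R // 1 ∉ S} => cayleyIso (S : Set R) T) ≃
      orbitRel.Quotient (MulAut R) (connectionSets R) :=
    Quot.congrRight h.cayleyIso_iff_mem_orbit
  rw [Nat.card_congr classesEquivOrbits, ← Nat.card_prod,
    ← Nat.card_congr (sigmaFixedByEquivOrbitsProdGroup _ _), Nat.card_sigma]
  simp only [card_fixedBy_connectionSets]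

end Burnside

section SumsOverZMod

variable {M : Type*} [AddCommMonoid M] {n : ℕ} [NeZero n]

lemma exists_natCast_eq_unit_mul_gcd (t : ℕ) :
    ∃ u : (ZMod n)ˣ, (t : ZMod n) = u * (n.gcd t : ℕ) := by
  obtain ⟨d, hd, _, ⟨u, rfl⟩, htu⟩ := ZMod.eq_unit_mul_divisor (t : ZMod n)
  have t_modEq : t ≡ (u : ZMod n).val * d [MOD n] := by
    rw [← ZMod.natCast_eq_natCast_iff, htu, Nat.cast_mul, ZMod.natCast_zmod_val]
  have gcd_eq : n.gcd t = d := calc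
    n.gcd t = n.gcd ((u : ZMod n).val * d) := by
      rw [Nat.gcd_comm, t_modEq.gcd_eq, Nat.gcd_comm]
    _ = n.gcd d := (ZMod.val_coe_unit_coprime u).gcd_mul_left_cancel_right d
    _ = d := Nat.gcd_eq_right hd
  exact ⟨u, by rw [gcd_eq, htu]⟩

lemma sum_zmod_eq_sum_range (G : ZMod n → M) : ∑ t, G t = ∑ t ∈ Finset.range n, G t :=
  Finset.sum_nbij' ZMod.val (↑) (fun t _ => Finset.mem_range.2 t.val_lt)
    (fun _ _ => Finset.mem_univ _) (fun t _ => t.natCast_zmod_val)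
    (fun _ ht => ZMod.val_natCast_of_lt (Finset.mem_range.1 ht))
    (fun t _ => by rw [ZMod.natCast_zmod_val])

lemma sum_zmod_eq_sum_divisors (G : ZMod n → M) (hG : ∀ (u : (ZMod n)ˣ) t, G (u * t) = G t) :
    ∑ t, G t = ∑ d ∈ n.divisors, (n / d).totient • G d := by
  have gcd_mem_divisors (t : ℕ) (_ : t ∈ Finset.range n) : n.gcd t ∈ n.divisors :=
    Nat.mem_divisors.2 ⟨n.gcd_dvd_left t, NeZero.ne n⟩
  rw [sum_zmod_eq_sum_range, ← Finset.sum_fiberwise_of_maps_to gcd_mem_divisors]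
  refine Finset.sum_congr rfl fun d hd => ?_
  rw [Nat.totient_div_of_dvd (Nat.dvd_of_mem_divisors hd), ← Finset.sum_const]
  refine Finset.sum_congr rfl fun t ht => ?_
  obtain ⟨u, hu⟩ := exists_natCast_eq_unit_mul_gcd (n := n) t
  rw [hu, hG, (Finset.mem_filter.1 ht).2]

lemma sum_zmod_units_eq_sum_coprime (hn : n ≠ 1) (F : ℕ → M) :
    ∑ u : (ZMod n)ˣ, F (u : ZMod n).val = ∑ r ∈ Finset.Icc 1 (n - 1) with r.gcd n = 1, F r := by
  refine Finset.sum_bij (fun u _ => (u : ZMod n).val) (fun u _ => ?_)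
    (fun u _ v _ huv => Units.ext (ZMod.val_injective n huv)) (fun r hr => ?_) fun _ _ => rfl
  · have val_coprime : (u : ZMod n).val.gcd n = 1 := ZMod.val_coe_unit_coprime u
    have val_ne_zero : (u : ZMod n).val ≠ 0 := fun hu => hn <| by simpa [hu] using val_coprime
    have val_lt := (u : ZMod n).val_lt
    exact Finset.mem_filter.2 ⟨Finset.mem_Icc.2 (by omega), val_coprime⟩
  · obtain ⟨r_mem, r_coprime⟩ := Finset.mem_filter.1 hr
    refine ⟨ZMod.unitOfCoprime r r_coprime, Finset.mem_univ _, ?_⟩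
    rw [ZMod.coe_unitOfCoprime, ZMod.val_natCast_of_lt (by rw [Finset.mem_Icc] at r_mem; omega)]

end SumsOverZMod

section DihedralAutomorphisms

open DihedralGroup

variable {n : ℕ}

/-- The automorphism `a_{n,r,t}` of `D_{2n}`, with `r` and `t` taken modulo `n` and the
sign of `t` as in `dihedralAut`. -/
def dihedralMulAut (u : (ZMod n)ˣ) (t : ZMod n) : MulAut (DihedralGroup n) where
  toFun
    | r i => r (u * i)
    | sr j => sr (u * j - t)
  invFun
    | r i => r (↑u⁻¹ * i)
    | sr j => sr (↑u⁻¹ * (j + t))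
  left_inv := by rintro (i | j) <;> simp
  right_inv := by rintro (i | j) <;> simp
  map_mul' := by rintro (i | i) (j | j) <;> simp <;> ring

@[simp]
lemma dihedralMulAut_r (u : (ZMod n)ˣ) (t i : ZMod n) :
    dihedralMulAut u t (r i) = r ((u : ZMod n) * i) :=
  rfl

@[simp]
lemma dihedralMulAut_sr (u : (ZMod n)ˣ) (t j : ZMod n) :
    dihedralMulAut u t (sr j) = sr ((u : ZMod n) * j - t) :=
  rfl

lemma dihedralAut_val_eq_dihedralMulAut [NeZero n] (u : (ZMod n)ˣ) (t : ℤ) :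
    dihedralAut n (u : ZMod n).val t = dihedralMulAut u (t : ZMod n) := by
  funext x
  cases x <;> simp [dihedralAut]

lemma semiconj_dihedralMulAut (s u : (ZMod n)ˣ) (t : ZMod n) :
    Function.Semiconj (dihedralMulAut s 0) (dihedralMulAut u t) (dihedralMulAut u (s * t)) := by
  rintro (i | j)
  · simp [mul_left_comm]
  · simp [mul_sub, mul_left_comm]

lemma exists_mulAut_r_eq (hn : n ≠ 2) (a : MulAut (DihedralGroup n)) :
    ∃ k : ZMod n, ∀ i, a (r i) = r (k * i) := by
  rcases hk : a (r 1) with k | k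
  · refine ⟨k, fun i => ?_⟩
    rw [← ZMod.intCast_zmod_cast i, ← r_one_zpow, map_zpow, hk, r_zpow]
  · have order_eq : orderOf (a (r 1)) = n := by rw [MulEquiv.orderOf_eq, orderOf_r_one]
    exact absurd (order_eq.symm.trans (hk ▸ orderOf_sr k)) hn

lemma exists_mulAut_eq_dihedralMulAut (hn : n ≠ 2) (a : MulAut (DihedralGroup n)) :
    ∃ u t, a = dihedralMulAut u t := by
  obtain ⟨k, hk⟩ := exists_mulAut_r_eq hn a
  obtain ⟨l, hl⟩ := exists_mulAut_r_eq hn a⁻¹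
  have l_mul_k : l * k = 1 := by
    simpa [hk, hl] using MulAut.inv_apply_self _ a (r 1)
  rcases hc : a (sr 0) with c | c
  · simpa [hc, hl] using MulAut.inv_apply_self _ a (sr 0)
  · refine ⟨⟨k, l, by rwa [mul_comm], l_mul_k⟩, -c, MulEquiv.ext ?_⟩
    rintro (i | j)
    · exact hk i
    · rw [show sr j = sr 0 * r j by simp, map_mul, hc, hk]
      simp [add_comm]

lemma bijective_dihedralMulAut (hn : n ≠ 2) :
    Function.Bijective fun p : (ZMod n)ˣ × ZMod n => dihedralMulAut p.1 p.2 := by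
  constructor
  · rintro ⟨u, t⟩ ⟨u', t'⟩ h
    have on_r := DFunLike.congr_fun h (r 1)
    have on_sr := DFunLike.congr_fun h (sr 0)
    simp only [dihedralMulAut_r, dihedralMulAut_sr, mul_one, mul_zero, zero_sub, r.injEq,
      sr.injEq, neg_inj] at on_r on_sr
    exact Prod.ext (Units.ext on_r) on_sr
  · intro a
    obtain ⟨u, t, rfl⟩ := exists_mulAut_eq_dihedralMulAut hn a
    exact ⟨(u, t), rfl⟩

lemma card_mulAut_dihedralGroup [NeZero n] (hn : n ≠ 2) :
    Nat.card (MulAut (DihedralGroup n)) = n * n.totient := by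
  rw [← Nat.card_congr (Equiv.ofBijective _ (bijective_dihedralMulAut hn)), Nat.card_prod,
    Nat.card_zmod, Nat.card_eq_fintype_card, ZMod.card_units_eq_totient, mul_comm]

end DihedralAutomorphisms

section DihedralCycles

open DihedralGroup

variable {n : ℕ}

lemma Un_union_Vn : Un n ∪ Vn n = {1}ᶜ := by
  ext (i | j) <;> simp [Un, Vn, ← r_zero]

lemma disjoint_Un_Vn : Disjoint (Un n) (Vn n) := by
  rw [disjoint_left]
  rintro _ ⟨⟨i, rfl⟩, -⟩ ⟨j, hj⟩
  cases hj

lemma dihedralMulAut_preimage_Un (u : (ZMod n)ˣ) (t : ZMod n) :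
    dihedralMulAut u t ⁻¹' Un n = Un n := by
  ext (i | j) <;> simp [Un, ← r_zero]

lemma dihedralMulAut_preimage_Vn (u : (ZMod n)ˣ) (t : ZMod n) :
    dihedralMulAut u t ⁻¹' Vn n = Vn n := by
  ext (i | j) <;> simp [Vn]

lemma cycleCount_dihedralMulAut_compl_one [NeZero n] (u : (ZMod n)ˣ) (t : ZMod n) :
    cycleCount (dihedralMulAut u t) {1}ᶜ =
      cycleCount (dihedralMulAut u 0) (Un n) + cycleCount (dihedralMulAut u t) (Vn n) := by
  have eqOn_Un : EqOn (dihedralMulAut u t) (dihedralMulAut u 0) (Un n) := by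
    rintro _ ⟨⟨i, rfl⟩, -⟩
    rfl
  rw [← Un_union_Vn, cycleCount_union (dihedralMulAut_preimage_Un u t).ge
    (dihedralMulAut_preimage_Vn u t).ge disjoint_Un_Vn, cycleCount_congr eqOn_Un]

lemma cycleCount_dihedralMulAut_unit_mul (s u : (ZMod n)ˣ) (t : ZMod n) :
    cycleCount (dihedralMulAut u (s * t)) (Vn n) = cycleCount (dihedralMulAut u t) (Vn n) := by
  rw [← cycleCount_preimage_of_semiconj (dihedralMulAut s 0).toEquiv
    (semiconj_dihedralMulAut s u t)]
  exact congrArg _ (dihedralMulAut_preimage_Vn s 0)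

lemma card_cayleyClasses_dihedral_mul_eq_sum [NeZero n] (hn : n ≠ 2)
    (h : IsDCI (DihedralGroup n)) :
    Nat.card (Quot fun S T : {S : Set (DihedralGroup n) // (1 : DihedralGroup n) ∉ S} =>
        cayleyIso (S : Set (DihedralGroup n)) (T : Set (DihedralGroup n))) * (n * n.totient) =
      ∑ t : ZMod n, ∑ u : (ZMod n)ˣ,
        2 ^ (cycleCount (dihedralMulAut u 0) (Un n) + cycleCount (dihedralMulAut u t) (Vn n)) := by
  let parametrization := Equiv.ofBijective _ (bijective_dihedralMulAut hn)
  let : Fintype (MulAut (DihedralGroup n)) := Fintype.ofEquiv _ parametrization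
  rw [← card_mulAut_dihedralGroup hn, h.card_cayleyClasses_mul_card_mulAut,
    ← parametrization.sum_comp, Fintype.sum_prod_type_right]
  simp only [parametrization, Equiv.ofBijective_apply, cycleCount_dihedralMulAut_compl_one]

lemma sum_dihedralMulAut_eq_sum_dihedralAut [NeZero n] (hn : n ≠ 1) (t : ℕ) :
    ∑ u : (ZMod n)ˣ,
        2 ^ (cycleCount (dihedralMulAut u 0) (Un n) + cycleCount (dihedralMulAut u t) (Vn n)) =
      ∑ r ∈ Finset.Icc 1 (n - 1) with r.gcd n = 1,
        2 ^ (cycleCount (dihedralAut n r 0) (Un n) + cycleCount (dihedralAut n r t) (Vn n)) := by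
  rw [← sum_zmod_units_eq_sum_coprime hn]
  simp only [dihedralAut_val_eq_dihedralMulAut, Int.cast_natCast, Int.cast_zero]

end DihedralCycles

/-- Assume `D_{2n}` is a DCI-group with `n > 2`. Then the number of
isomorphism classes of Cayley digraphs on `D_{2n}` equals
`(1/(n·φ(n))) · Σ_{t ∣ n} φ(n/t) · Σ_{1 ≤ r ≤ n-1, gcd(r,n)=1} 2^{c(U_n,a_{n,r,0}) + c(V_n,a_{n,r,t})}`. -/
theorem card_cayleyClasses_dihedral_of_isDCI (n : ℕ) (hn : 2 < n)
    (h : IsDCI (DihedralGroup n)) :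
    (Nat.card (Quot fun S T : {S : Set (DihedralGroup n) // (1 : DihedralGroup n) ∉ S} =>
        cayleyIso (S : Set (DihedralGroup n)) (T : Set (DihedralGroup n))) : ℚ)
      = (1 / ((n : ℚ) * (Nat.totient n : ℚ))) *
          ∑ t ∈ Nat.divisors n, (Nat.totient (n / t) : ℚ) *
            ∑ r ∈ Finset.filter (fun r => Nat.gcd r n = 1) (Finset.Icc 1 (n - 1)),
              (2 : ℚ) ^ (cycleCount (dihedralAut n (r : ℤ) 0) (Un n)
                + cycleCount (dihedralAut n (r : ℤ) (t : ℤ)) (Vn n)) := by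
  have : NeZero n := ⟨by omega⟩
  have card_mulAut_ne_zero : (n : ℚ) * (n.totient : ℚ) ≠ 0 := by
    have := Nat.totient_pos.2 (NeZero.pos n)
    positivity
  have card_mul_eq := card_cayleyClasses_dihedral_mul_eq_sum (by omega) h
  rw [sum_zmod_eq_sum_divisors _ fun s t => by simp only [cycleCount_dihedralMulAut_unit_mul]]
    at card_mul_eq
  simp only [sum_dihedralMulAut_eq_sum_dihedralAut (show n ≠ 1 by omega), smul_eq_mul]
    at card_mul_eq
  rw [one_div, eq_inv_mul_iff_mul_eq₀ card_mulAut_ne_zero, mul_comm]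
  exact_mod_cast card_mul_eq
end
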